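/- arXiv:2301.11571 — 2 statements merged into one kernel-verified Lean document; each statement's English description precedes it below -/
import Mathlib

section
/- There exist universal constants c̃₁, c̃₂ ∈ (0,1] and c̃₃ ≥ 1 such that for every positive integer n, every real β with 0 < β ≤ c̃₁/6, and every x ∈ ℝ^n with x_i ≥ 0 for all i and ∑_{i=1}^n x_i ≥ (1−β)/2, if h(1),…,h(n) are i.i.d. uniform random variables in {−1,1}, then ℙ[∑_{i=1}^n h(i)·x_i ≥ β] ≥ c̃₂·exp(−16·c̃₃·β²·n/c̃₁²). -/
open MeasureTheory

/-!
A sum `S` of independent random signs `±x i` satisfies `𝔼 S ^ 4 ≤ 3 * (𝔼 S ^ 2) ^ 2`, so the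
Paley-Zygmund inequality for `S ^ 2` together with symmetry gives
`ℙ (S ≥ √(∑ x i ^ 2) / 2) ≥ 3 / 32`. By Cauchy-Schwarz, over a block `s` of at most
`1 / (4 * θ ^ 2)` indices this threshold is at least `θ * ∑ i ∈ s, x i`. Cutting the index set into
`O(θ ^ 2 * n + 1)` such blocks and asking for the event on each of them, independence gives
`ℙ (∑ i, ±x i ≥ θ * ∑ i, x i) ≥ exp (-O(θ ^ 2 * n + 1))`. Since `∑ i, x i ≥ 5 / 12`, the choice
`θ = 5 * β / 2` makes the threshold at least `β`.
-/

open Finset ProbabilityTheory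

section Moments

variable {Ω : Type*} {mΩ : MeasurableSpace Ω} {μ : Measure Ω} {X Y : Ω → ℝ}

theorem integrable_pow_of_memLp [IsFiniteMeasure μ] {k : ℕ} (hX : MemLp X k μ) :
    Integrable (fun ω ↦ X ω ^ k) μ := by
  have h : Integrable (fun ω ↦ ‖X ω ^ k‖) μ := by
    simpa only [norm_pow] using hX.integrable_norm_pow'
  exact (integrable_norm_iff (hX.aestronglyMeasurable.pow k)).1 h

theorem sq_integral_le_measureReal_univ_mul [IsFiniteMeasure μ] (hX : MemLp X 2 μ) :
    (∫ ω, X ω ∂μ) ^ 2 ≤ μ.real Set.univ * ∫ ω, X ω ^ 2 ∂μ := by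
  have hX_int : Integrable X μ := hX.integrable one_le_two
  have hX_sq : Integrable (fun ω ↦ X ω ^ 2) μ := hX.integrable_sq
  have hdiscrim : discrim (μ.real Set.univ) (-2 * ∫ ω, X ω ∂μ) (∫ ω, X ω ^ 2 ∂μ) ≤ 0 := by
    refine discrim_le_zero fun r ↦ ?_
    calc
      0 ≤ ∫ ω, (X ω - r) ^ 2 ∂μ := integral_nonneg fun ω ↦ sq_nonneg _
      _ = μ.real Set.univ * (r * r) + (-2 * ∫ ω, X ω ∂μ) * r + ∫ ω, X ω ^ 2 ∂μ := by
        simp only [sub_sq]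
        rw [integral_add (by fun_prop) (by fun_prop), integral_sub (by fun_prop) (by fun_prop),
          integral_mul_const, integral_const_mul, integral_const, smul_eq_mul]
        ring
  rw [discrim] at hdiscrim
  linarith

theorem paley_zygmund [IsProbabilityMeasure μ] {θ : ℝ} (hX : MemLp X 2 μ)
    (hmean : 0 ≤ ∫ ω, X ω ∂μ) (hθ₀ : 0 ≤ θ) (hθ₁ : θ ≤ 1) :
    ((1 - θ) * ∫ ω, X ω ∂μ) ^ 2 ≤
      μ.real {ω | θ * ∫ ω', X ω' ∂μ < X ω} * ∫ ω, X ω ^ 2 ∂μ := by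
  set m := ∫ ω, X ω ∂μ
  set A : Set Ω := {ω | θ * m < X ω}
  have hX_int : Integrable X μ := hX.integrable one_le_two
  have hA : NullMeasurableSet A μ := nullMeasurableSet_lt aemeasurable_const hX.aemeasurable
  have hcompl : ∫ ω in Aᶜ, X ω ∂μ ≤ θ * m := by
    calc
      ∫ ω in Aᶜ, X ω ∂μ ≤ ∫ _ in Aᶜ, θ * m ∂μ :=
        setIntegral_mono_on₀ hX_int.integrableOn (integrable_const _) hA.compl
          fun ω hω ↦ not_lt.1 hω
      _ = μ.real Aᶜ * (θ * m) := by rw [setIntegral_const, smul_eq_mul]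
      _ ≤ θ * m := mul_le_of_le_one_left (by positivity) measureReal_le_one
  have hmean_le : (1 - θ) * m ≤ ∫ ω in A, X ω ∂μ := by
    linarith [integral_add_compl₀ hA hX_int]
  calc
    ((1 - θ) * m) ^ 2 ≤ (∫ ω in A, X ω ∂μ) ^ 2 :=
      pow_le_pow_left₀ (mul_nonneg (sub_nonneg.2 hθ₁) hmean) hmean_le 2
    _ ≤ μ.real A * ∫ ω in A, X ω ^ 2 ∂μ := by
      simpa using sq_integral_le_measureReal_univ_mul (hX.restrict A)
    _ ≤ μ.real A * ∫ ω, X ω ^ 2 ∂μ := mul_le_mul_of_nonneg_left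
      (setIntegral_le_integral hX.integrable_sq (ae_of_all _ fun ω ↦ sq_nonneg (X ω)))
      measureReal_nonneg

theorem integral_add_pow_of_indepFun [IsFiniteMeasure μ] {n : ℕ} (hX : MemLp X n μ)
    (hY : MemLp Y n μ) (hXY : X ⟂ᵢ[μ] Y) :
    ∫ ω, (X ω + Y ω) ^ n ∂μ =
      ∑ k ∈ range (n + 1), (∫ ω, X ω ^ k ∂μ) * (∫ ω, Y ω ^ (n - k) ∂μ) * n.choose k := by
  have hindep (j k : ℕ) : (fun ω ↦ X ω ^ j) ⟂ᵢ[μ] (fun ω ↦ Y ω ^ k) :=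
    hXY.comp (measurable_id.pow_const j) (measurable_id.pow_const k)
  have hint {Z : Ω → ℝ} (hZ : MemLp Z n μ) {k : ℕ} (hk : k ≤ n) :
      Integrable (fun ω ↦ Z ω ^ k) μ :=
    integrable_pow_of_memLp (hZ.mono_exponent (mod_cast hk))
  simp only [add_pow]
  rw [integral_finsetSum]
  · refine sum_congr rfl fun k _ ↦ ?_
    rw [integral_mul_const, (hindep k (n - k)).integral_fun_mul_eq_mul_integral
      (hX.aestronglyMeasurable.pow k) (hY.aestronglyMeasurable.pow (n - k))]
  · intro k hk
    exact ((hindep k (n - k)).integrable_mul (hint hX (mem_range_succ_iff.1 hk))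
      (hint hY (n.sub_le k))).mul_const _

theorem integral_add_pow_four_of_indepFun [IsProbabilityMeasure μ] (hX : MemLp X 4 μ)
    (hY : MemLp Y 4 μ) (hXY : X ⟂ᵢ[μ] Y) (hX₀ : ∫ ω, X ω ∂μ = 0) (hY₀ : ∫ ω, Y ω ∂μ = 0) :
    ∫ ω, (X ω + Y ω) ^ 4 ∂μ =
      ∫ ω, X ω ^ 4 ∂μ + 6 * ((∫ ω, X ω ^ 2 ∂μ) * ∫ ω, Y ω ^ 2 ∂μ) + ∫ ω, Y ω ^ 4 ∂μ := by
  rw [integral_add_pow_of_indepFun (n := 4) (mod_cast hX) (mod_cast hY) hXY]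
  simp only [Nat.reduceAdd, sum_range_succ, range_one, sum_singleton, pow_zero, integral_const,
    probReal_univ, smul_eq_mul, mul_one, tsub_zero, one_mul, Nat.choose, Nat.cast_one, pow_one,
    hX₀, Nat.add_one_sub_one, zero_mul, add_zero, Nat.cast_ofNat, Nat.reduceSub, hY₀, mul_zero,
    tsub_self]
  ring

theorem integral_eq_zero_of_identDistrib_neg (h : IdentDistrib X (-X) μ μ) :
    ∫ ω, X ω ∂μ = 0 := by
  have : ∫ ω, X ω ∂μ = -∫ ω, X ω ∂μ := by rw [← integral_neg]; exact h.integral_eq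
  linarith

theorem measureReal_le_abs_le_two_mul [IsFiniteMeasure μ] (h : IdentDistrib X (-X) μ μ) (t : ℝ) :
    μ.real {ω | t ≤ |X ω|} ≤ 2 * μ.real {ω | t ≤ X ω} := by
  have hneg : μ.real {ω | t ≤ -X ω} = μ.real {ω | t ≤ X ω} :=
    congrArg ENNReal.toReal (h.measure_mem_eq measurableSet_Ici).symm
  calc
    μ.real {ω | t ≤ |X ω|} = μ.real ({ω | t ≤ X ω} ∪ {ω | t ≤ -X ω}) := by
      simp only [le_abs, Set.ofPred_or]
    _ ≤ μ.real {ω | t ≤ X ω} + μ.real {ω | t ≤ -X ω} := measureReal_union_le _ _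
    _ = 2 * μ.real {ω | t ≤ X ω} := by rw [hneg, two_mul]

theorem measureReal_le_mul_measureReal_le_of_indepFun [IsFiniteMeasure μ] (hXY : X ⟂ᵢ[μ] Y)
    (s t : ℝ) : μ.real {ω | s ≤ X ω} * μ.real {ω | t ≤ Y ω} ≤ μ.real {ω | s + t ≤ X ω + Y ω} := by
  have hinter : μ.real ({ω | s ≤ X ω} ∩ {ω | t ≤ Y ω}) =
      μ.real {ω | s ≤ X ω} * μ.real {ω | t ≤ Y ω} := by
    rw [measureReal_def, measureReal_def, measureReal_def, ← ENNReal.toReal_mul]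
    exact congrArg ENNReal.toReal
      (hXY.measure_inter_preimage_eq_mul _ _ measurableSet_Ici measurableSet_Ici)
  rw [← hinter]
  exact measureReal_mono fun ω hω ↦ add_le_add (α := ℝ) hω.1 hω.2

end Moments

/-- A symmetric real random variable whose kurtosis is at most `3`, the value for a Gaussian.
Symmetry means that `X` and `-X` have the same law, so that `X` is centred and `Var[X; μ]` is its
second moment. Closure under independent sums is what makes the notion useful. -/
structure IsSymmPlatykurtic {Ω : Type*} {mΩ : MeasurableSpace Ω} (X : Ω → ℝ) (μ : Measure Ω) :
    Prop where
  memLp : MemLp X 4 μ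
  identDistrib_neg : IdentDistrib X (-X) μ μ
  integral_pow_four_le : ∫ ω, X ω ^ 4 ∂μ ≤ 3 * Var[X; μ] ^ 2

namespace IsSymmPlatykurtic

variable {Ω : Type*} {mΩ : MeasurableSpace Ω} {μ : Measure Ω} {X Y : Ω → ℝ}

theorem integral_eq_zero (hX : IsSymmPlatykurtic X μ) : ∫ ω, X ω ∂μ = 0 :=
  integral_eq_zero_of_identDistrib_neg hX.identDistrib_neg

theorem variance_eq (hX : IsSymmPlatykurtic X μ) : Var[X; μ] = ∫ ω, X ω ^ 2 ∂μ :=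
  variance_of_integral_eq_zero hX.memLp.aemeasurable hX.integral_eq_zero

theorem memLp_two [IsFiniteMeasure μ] (hX : IsSymmPlatykurtic X μ) : MemLp X 2 μ :=
  hX.memLp.mono_exponent (by norm_num)

theorem zero [IsFiniteMeasure μ] : IsSymmPlatykurtic (0 : Ω → ℝ) μ where
  memLp := MemLp.zero
  identDistrib_neg := by rw [neg_zero]; exact .refl aemeasurable_zero
  integral_pow_four_le := by simp

theorem of_sq_eq_const [IsProbabilityMeasure μ] {c : ℝ}
    (hsymm : IdentDistrib X (-X) μ μ) (hsq : ∀ ω, X ω ^ 2 = c ^ 2) : IsSymmPlatykurtic X μ where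
  memLp := MemLp.of_bound hsymm.aemeasurable_fst.aestronglyMeasurable |c| <|
    ae_of_all _ fun ω ↦ ((sq_eq_sq_iff_abs_eq_abs _ _).1 (hsq ω)).le
  identDistrib_neg := hsymm
  integral_pow_four_le := by
    have hfour (ω : Ω) : X ω ^ 4 = c ^ 4 := by rw [pow_mul (X ω) 2 2, hsq, ← pow_mul]
    rw [variance_of_integral_eq_zero hsymm.aemeasurable_fst
      (integral_eq_zero_of_identDistrib_neg hsymm)]
    simp only [hfour, hsq, integral_const, probReal_univ, one_smul]
    nlinarith [sq_nonneg (c ^ 2)]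

theorem add [IsProbabilityMeasure μ] (hX : IsSymmPlatykurtic X μ) (hY : IsSymmPlatykurtic Y μ)
    (hXY : X ⟂ᵢ[μ] Y) : IsSymmPlatykurtic (X + Y) μ where
  memLp := hX.memLp.add hY.memLp
  identDistrib_neg := by
    have hneg : (-X) ⟂ᵢ[μ] (-Y) := hXY.comp measurable_neg measurable_neg
    rw [neg_add]
    exact (hX.identDistrib_neg.prodMk hY.identDistrib_neg hXY hneg).comp measurable_add
  integral_pow_four_le := by
    rw [hXY.variance_add hX.memLp_two hY.memLp_two]
    calc
      ∫ ω, (X ω + Y ω) ^ 4 ∂μ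
        = ∫ ω, X ω ^ 4 ∂μ + 6 * (Var[X; μ] * Var[Y; μ]) + ∫ ω, Y ω ^ 4 ∂μ := by
        rw [hX.variance_eq, hY.variance_eq]
        exact integral_add_pow_four_of_indepFun hX.memLp hY.memLp hXY hX.integral_eq_zero
          hY.integral_eq_zero
      _ ≤ 3 * Var[X; μ] ^ 2 + 6 * (Var[X; μ] * Var[Y; μ]) + 3 * Var[Y; μ] ^ 2 := by
        gcongr
        exacts [hX.integral_pow_four_le, hY.integral_pow_four_le]
      _ = 3 * (Var[X; μ] + Var[Y; μ]) ^ 2 := by ring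

theorem sum {ι : Type*} [IsProbabilityMeasure μ] {X : ι → Ω → ℝ} (hindep : iIndepFun X μ)
    (hX : ∀ i, IsSymmPlatykurtic (X i) μ) (s : Finset ι) :
    IsSymmPlatykurtic (∑ i ∈ s, X i) μ := by
  classical
  induction s using Finset.induction_on with
  | empty => simpa only [sum_empty] using zero
  | insert i s hi ih =>
    rw [sum_insert hi]
    exact (hX i).add ih
      (hindep.indepFun_finsetSum_of_notMem₀ (fun j ↦ (hX j).memLp.aemeasurable) hi).symm

theorem le_measureReal_le_abs [IsProbabilityMeasure μ] (hX : IsSymmPlatykurtic X μ) {t : ℝ}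
    (ht : 4 * t ^ 2 ≤ Var[X; μ]) : 3 / 16 ≤ μ.real {ω | t ≤ |X ω|} := by
  have hsub : {ω | 1 / 4 * Var[X; μ] < X ω ^ 2} ⊆ {ω | t ≤ |X ω|} := fun ω (hω : _ < X ω ^ 2) ↦
    (le_abs_self t).trans (sq_le_sq.1 (by linarith))
  rcases (variance_nonneg X μ).eq_or_lt with hvar | hvar
  · have ht₀ : t = 0 := by nlinarith
    simp only [ht₀, abs_nonneg, Set.ofPred_true, probReal_univ]
    norm_num
  · have hsq : MemLp (fun ω ↦ X ω ^ 2) 2 μ := by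
      refine (memLp_two_iff_integrable_sq (hX.memLp.aestronglyMeasurable.pow 2)).2 ?_
      simpa only [Pi.pow_apply, ← pow_mul] using
        integrable_pow_of_memLp (k := 4) (mod_cast hX.memLp)
    have hpz := paley_zygmund hsq (integral_nonneg fun ω ↦ sq_nonneg (X ω))
      (θ := 1 / 4) (by norm_num) (by norm_num)
    simp only [← hX.variance_eq, ← pow_mul] at hpz
    refine le_of_mul_le_mul_right ?_ (show 0 < 3 * Var[X; μ] ^ 2 by positivity)
    calc
      3 / 16 * (3 * Var[X; μ] ^ 2) = ((1 - 1 / 4) * Var[X; μ]) ^ 2 := by ring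
      _ ≤ μ.real {ω | 1 / 4 * Var[X; μ] < X ω ^ 2} * ∫ ω, X ω ^ 4 ∂μ := hpz
      _ ≤ μ.real {ω | t ≤ |X ω|} * (3 * Var[X; μ] ^ 2) := by
        gcongr
        · exact measure_ne_top _ _
        · exact hX.integral_pow_four_le

theorem le_measureReal_le [IsProbabilityMeasure μ] (hX : IsSymmPlatykurtic X μ) {t : ℝ}
    (ht : 4 * t ^ 2 ≤ Var[X; μ]) : 3 / 32 ≤ μ.real {ω | t ≤ X ω} := by
  linarith [hX.le_measureReal_le_abs ht, measureReal_le_abs_le_two_mul hX.identDistrib_neg t]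

end IsSymmPlatykurtic

section BlockDecomposition

theorem exists_nat_mul_mem_Icc {a : ℝ} (ha₀ : 0 < a) (ha₁ : a ≤ 1) :
    ∃ m : ℕ, (m : ℝ) * a ∈ Set.Icc (1 / 2) 1 := by
  have hm : (⌊1 / a⌋₊ : ℝ) * a ≤ 1 := by
    rw [← le_div_iff₀ ha₀]; exact Nat.floor_le (by positivity)
  have hm_pos : (1 : ℝ) ≤ ⌊1 / a⌋₊ := by
    exact_mod_cast Nat.le_floor (by rw [Nat.cast_one, le_div_iff₀ ha₀, one_mul]; exact ha₁)
  have hm_succ : 1 < (⌊1 / a⌋₊ + 1 : ℝ) * a := by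
    rw [← div_lt_iff₀ ha₀]; exact Nat.lt_floor_add_one _
  exact ⟨⌊1 / a⌋₊, by nlinarith, hm⟩

theorem rpow_card_le_of_mul_le_union {ι : Type*} [DecidableEq ι] {f : Finset ι → ℝ} {p a : ℝ}
    (hp₀ : 0 < p) (hp₁ : p ≤ 1) (ha₀ : 0 ≤ a) (ha₁ : a ≤ 1)
    (hsmall : ∀ s : Finset ι, #s * a ≤ 1 → p ≤ f s)
    (hunion : ∀ s t : Finset ι, Disjoint s t → f s * f t ≤ f (s ∪ t)) (s : Finset ι) :
    p ^ (2 * (#s * a) + 1) ≤ f s := by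
  induction s using Finset.strongInduction with
  | H s ih =>
  rcases le_or_gt (#s * a) 1 with hs | hs
  · calc
      p ^ (2 * (#s * a) + 1) ≤ p ^ (1 : ℝ) :=
        Real.rpow_le_rpow_of_exponent_ge hp₀ hp₁ (by linarith [show 0 ≤ #s * a by positivity])
      _ ≤ f s := by rw [Real.rpow_one]; exact hsmall s hs
  · have ha_pos : 0 < a := ha₀.lt_of_ne' fun h ↦ by norm_num [h] at hs
    obtain ⟨m, hm_half, hm_one⟩ := exists_nat_mul_mem_Icc ha_pos ha₁
    have hm_le : m ≤ #s := by
      exact_mod_cast (lt_of_mul_lt_mul_right (hm_one.trans_lt hs) ha₀).le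
    obtain ⟨t, hts, rfl⟩ := exists_subset_card_eq hm_le
    have ht : t.Nonempty := by
      rw [nonempty_iff_ne_empty]; rintro rfl; norm_num at hm_half
    have hcard : (#s : ℝ) = #t + #(s \ t) := by
      exact_mod_cast (add_comm _ _).trans (card_sdiff_add_card_eq_card hts) |>.symm
    calc
      p ^ (2 * (#s * a) + 1) ≤ p ^ (1 + (2 * (#(s \ t) * a) + 1)) :=
        Real.rpow_le_rpow_of_exponent_ge hp₀ hp₁ (by rw [hcard]; linarith)
      _ = p * p ^ (2 * (#(s \ t) * a) + 1) := by rw [Real.rpow_add hp₀, Real.rpow_one]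
      _ ≤ f t * f (s \ t) :=
        mul_le_mul (hsmall t hm_one) (ih _ (sdiff_ssubset hts ht)) (by positivity)
          (hp₀.le.trans (hsmall t hm_one))
      _ ≤ f s := by simpa only [union_sdiff_of_subset hts] using hunion t (s \ t) disjoint_sdiff

end BlockDecomposition

section IndependentSums

variable {Ω ι : Type*} {mΩ : MeasurableSpace Ω} {μ : Measure Ω} {X : ι → Ω → ℝ}

theorem indepFun_finsetSum_finsetSum (hindep : iIndepFun X μ) (hX : ∀ i, AEMeasurable (X i) μ)
    {s t : Finset ι} (hst : Disjoint s t) : (∑ i ∈ s, X i) ⟂ᵢ[μ] (∑ i ∈ t, X i) := by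
  have hsum (u : Finset ι) : Measurable fun y : u → ℝ ↦ ∑ i, y i := by fun_prop
  convert! (hindep.indepFun_finset₀ s t hst hX).comp (hsum s) (hsum t) using 1 <;>
  · funext ω
    simp only [Finset.sum_apply, Function.comp_apply, univ_eq_attach]
    exact (sum_attach _ fun i ↦ X i ω).symm

theorem rpow_card_le_measureReal_mul_sum_le_sum (hindep : iIndepFun X μ)
    (hX : ∀ i, IsSymmPlatykurtic (X i) μ) {c : ι → ℝ} (hc : ∀ i, c i ^ 2 ≤ Var[X i; μ]) {θ : ℝ}
    (hθ : 4 * θ ^ 2 ≤ 1) (s : Finset ι) :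
    (3 / 32 : ℝ) ^ (2 * (#s * (4 * θ ^ 2)) + 1) ≤
      μ.real {ω | θ * ∑ i ∈ s, c i ≤ (∑ i ∈ s, X i) ω} := by
  classical
  have := hindep.isProbabilityMeasure
  refine rpow_card_le_of_mul_le_union
    (f := fun s ↦ μ.real {ω | θ * ∑ i ∈ s, c i ≤ (∑ i ∈ s, X i) ω})
    (by norm_num) (by norm_num) (by positivity) hθ ?small ?union s
  case small =>
    intro s hs
    refine (IsSymmPlatykurtic.sum hindep hX s).le_measureReal_le ?_
    calc
      4 * (θ * ∑ i ∈ s, c i) ^ 2 = 4 * θ ^ 2 * (∑ i ∈ s, c i) ^ 2 := by ring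
      _ ≤ 4 * θ ^ 2 * (#s * ∑ i ∈ s, c i ^ 2) := by gcongr; exact sq_sum_le_card_mul_sum_sq
      _ = #s * (4 * θ ^ 2) * ∑ i ∈ s, c i ^ 2 := by ring
      _ ≤ ∑ i ∈ s, c i ^ 2 := mul_le_of_le_one_left (sum_nonneg fun i _ ↦ sq_nonneg (c i)) hs
      _ ≤ ∑ i ∈ s, Var[X i; μ] := sum_le_sum fun i _ ↦ hc i
      _ = Var[∑ i ∈ s, X i; μ] := (IndepFun.variance_sum (fun i _ ↦ (hX i).memLp_two)
        fun i _ j _ hij ↦ hindep.indepFun hij).symm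
  case union =>
    intro s t hst
    simp only [sum_union hst, mul_add]
    exact measureReal_le_mul_measureReal_le_of_indepFun
      (indepFun_finsetSum_finsetSum hindep (fun i ↦ (hX i).memLp.aemeasurable) hst) _ _

end IndependentSums

section UniformMeasure

theorem toMeasure_uniformOfFintype_pi {ι : Type*} [Fintype ι] [DecidableEq ι] {α : ι → Type*}
    [∀ i, Fintype (α i)] [∀ i, Nonempty (α i)] [∀ i, MeasurableSpace (α i)]
    [∀ i, MeasurableSingletonClass (α i)] :
    (PMF.uniformOfFintype (∀ i, α i)).toMeasure =
      Measure.pi fun i ↦ (PMF.uniformOfFintype (α i)).toMeasure := by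
  refine Measure.ext_of_singleton fun a ↦ ?_
  simp only [Measure.pi_singleton, PMF.toMeasure_apply_singleton _ _ (measurableSet_singleton _),
    PMF.uniformOfFintype_apply, Fintype.card_pi, Nat.cast_prod]
  exact ENNReal.prod_inv_distrib fun i _ _ _ _ ↦ Or.inr (ENNReal.natCast_ne_top _)

theorem measurePreserving_uniformOfFintype {α β : Type*} [Fintype α] [Nonempty α] [Fintype β]
    [Nonempty β] [MeasurableSpace α] [MeasurableSpace β] [MeasurableSingletonClass α]
    [MeasurableSingletonClass β] (e : α ≃ β) :
    MeasurePreserving e (PMF.uniformOfFintype α).toMeasure (PMF.uniformOfFintype β).toMeasure where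
  measurable := measurable_of_countable e
  map_eq := by
    refine Measure.ext_of_singleton fun b ↦ ?_
    rw [Measure.map_apply (measurable_of_countable e) (measurableSet_singleton b),
      ← e.image_symm_eq_preimage, Set.image_singleton]
    simp only [PMF.toMeasure_apply_singleton _ _ (measurableSet_singleton _),
      PMF.uniformOfFintype_apply, Fintype.card_congr e]

end UniformMeasure

/-- The random variable `h i * x i` on the hypercube of sign patterns, with `true` standing for the
sign `1` and `false` for `-1`. -/
def signedWeight {ι : Type*} (x : ι → ℝ) (i : ι) (h : ι → Bool) : ℝ :=
  (if h i then 1 else -1) * x i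

section SignedWeight

variable {ι : Type*} (x : ι → ℝ)

theorem signedWeight_sq (i : ι) (h : ι → Bool) : signedWeight x i h ^ 2 = x i ^ 2 := by
  unfold signedWeight
  split_ifs <;> ring

variable [Fintype ι] [DecidableEq ι]

theorem iIndepFun_signedWeight :
    iIndepFun (signedWeight x) (PMF.uniformOfFintype (ι → Bool)).toMeasure := by
  rw [toMeasure_uniformOfFintype_pi]
  exact iIndepFun_pi (X := fun i (b : Bool) ↦ (if b then 1 else -1) * x i)
    fun i ↦ (measurable_of_countable _).aemeasurable

theorem identDistrib_neg_signedWeight (i : ι) :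
    IdentDistrib (signedWeight x i) (-signedWeight x i)
      (PMF.uniformOfFintype (ι → Bool)).toMeasure (PMF.uniformOfFintype (ι → Bool)).toMeasure := by
  have hflip := measurePreserving_uniformOfFintype (Equiv.piCongrRight fun _ : ι ↦ Equiv.boolNot)
  have hneg : -signedWeight x i = signedWeight x i ∘ Equiv.piCongrRight fun _ ↦ Equiv.boolNot := by
    funext h
    cases hi : h i <;> simp [signedWeight, hi]
  have hmeas : Measurable (signedWeight x i) := measurable_of_countable _
  refine ⟨hmeas.aemeasurable, hmeas.neg.aemeasurable, ?_⟩
  rw [hneg, ← Measure.map_map hmeas hflip.measurable, hflip.map_eq]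

theorem isSymmPlatykurtic_signedWeight (i : ι) :
    IsSymmPlatykurtic (signedWeight x i) (PMF.uniformOfFintype (ι → Bool)).toMeasure :=
  .of_sq_eq_const (identDistrib_neg_signedWeight x i) (signedWeight_sq x i)

theorem variance_signedWeight (i : ι) :
    Var[signedWeight x i; (PMF.uniformOfFintype (ι → Bool)).toMeasure] = x i ^ 2 := by
  simp only [(isSymmPlatykurtic_signedWeight x i).variance_eq, signedWeight_sq, integral_const,
    probReal_univ, one_smul]

theorem exp_le_measureReal_mul_sum_le_sum_signedWeight {θ : ℝ} (hθ : 4 * θ ^ 2 ≤ 1) :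
    Real.exp (-(3 * (8 * θ ^ 2 * Fintype.card ι + 1))) ≤
      (PMF.uniformOfFintype (ι → Bool)).toMeasure.real
        {h | θ * ∑ i, x i ≤ ∑ i, signedWeight x i h} := by
  have hexp : Real.exp (-3) ≤ 3 / 32 := by
    calc
      Real.exp (-3) = (Real.exp 1 ^ 3)⁻¹ := by rw [← Real.exp_nat_mul, Real.exp_neg]; norm_num
      _ ≤ (2.7 ^ 3)⁻¹ := by gcongr; linarith [Real.exp_one_gt_d9]
      _ ≤ 3 / 32 := by norm_num
  calc
    Real.exp (-(3 * (8 * θ ^ 2 * Fintype.card ι + 1)))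
      = Real.exp (-3) ^ (8 * θ ^ 2 * Fintype.card ι + 1) := by rw [← Real.exp_mul, neg_mul]
    _ ≤ (3 / 32) ^ (8 * θ ^ 2 * Fintype.card ι + 1) := by gcongr
    _ = (3 / 32) ^ (2 * (#(univ : Finset ι) * (4 * θ ^ 2)) + 1) := by
      rw [card_univ]; congr 1; ring
    _ ≤ _ := by
      simpa only [Finset.sum_apply] using
        rpow_card_le_measureReal_mul_sum_le_sum (iIndepFun_signedWeight x)
          (isSymmPlatykurtic_signedWeight x) (fun i ↦ (variance_signedWeight x i).ge) hθ univ

end SignedWeight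

theorem adaboost_montgomery_smith_corollary_general :
    ∃ c1 c2 c3 : ℝ, 0 < c1 ∧ c1 ≤ 1 ∧ 0 < c2 ∧ c2 ≤ 1 ∧ 1 ≤ c3 ∧
      ∀ (ι : Type*) [Fintype ι] [DecidableEq ι] (β : ℝ), β ≤ c1 / 6 →
        ∀ x : ι → ℝ, (1 - β) / 2 ≤ ∑ i, x i →
          ENNReal.ofReal (c2 * Real.exp (-(16 * c3 * β ^ 2 * Fintype.card ι / c1 ^ 2))) ≤
            (PMF.uniformOfFintype (ι → Bool)).toMeasure
              {h | β ≤ ∑ i, (if h i then (1 : ℝ) else -1) * x i} := by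
  refine ⟨1, Real.exp (-3), 10, one_pos, le_rfl, Real.exp_pos _,
    Real.exp_le_one_iff.2 (by norm_num), by norm_num, fun ι _ _ β hβ x hx ↦ ?_⟩
  set θ := 5 / 2 * max β 0
  have hθ_small : 4 * θ ^ 2 ≤ 1 := by
    have hθ_le : θ ≤ 5 / 12 := by
      have hmax : max β 0 ≤ 1 / 6 := max_le hβ (by norm_num)
      simp only [θ]
      linarith
    nlinarith [show 0 ≤ θ by positivity]
  have hθ_sq : 8 * θ ^ 2 ≤ 50 * β ^ 2 := by
    rcases max_cases β 0 with ⟨h, _⟩ | ⟨h, _⟩ <;> simp only [θ, h] <;> nlinarith [sq_nonneg β]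
  have hβ_le : β ≤ θ * ∑ i, x i := by
    rcases max_cases β 0 with ⟨h, _⟩ | ⟨h, _⟩ <;> simp only [θ, h] <;> nlinarith
  rw [← ofReal_measureReal]
  refine ENNReal.ofReal_le_ofReal ?_
  calc
    Real.exp (-3) * Real.exp (-(16 * 10 * β ^ 2 * Fintype.card ι / 1 ^ 2))
      ≤ Real.exp (-(3 * (8 * θ ^ 2 * Fintype.card ι + 1))) := by
        rw [← Real.exp_add, Real.exp_le_exp]
        nlinarith [mul_le_mul_of_nonneg_right hθ_sq (Nat.cast_nonneg' (α := ℝ) (Fintype.card ι)),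
          show 0 ≤ β ^ 2 * Fintype.card ι by positivity]
    _ ≤ _ := exp_le_measureReal_mul_sum_le_sum_signedWeight x hθ_small
    _ ≤ _ := measureReal_mono fun h hh ↦ hβ_le.trans hh

/-- Anti-concentration for Rademacher sums (Montgomery-Smith):
there are universal constants `c1, c2 ∈ (0,1]` and `c3 ≥ 1` such that for every `n`,
every `0 < β ≤ c1/6` and every nonnegative `x` with `∑ x i ≥ (1-β)/2`, a uniformly
random sign vector `h` (`true ↦ 1`, `false ↦ -1`) satisfies
`ℙ[∑ h i · x i ≥ β] ≥ c2 · exp(-16 c3 β² n / c1²)`. -/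
theorem adaboost_montgomery_smith_corollary :
    ∃ c1 c2 c3 : ℝ, 0 < c1 ∧ c1 ≤ 1 ∧ 0 < c2 ∧ c2 ≤ 1 ∧ 1 ≤ c3 ∧
      ∀ (n : ℕ), 0 < n → ∀ β : ℝ, 0 < β → β ≤ c1 / 6 →
        ∀ x : Fin n → ℝ, (∀ i, 0 ≤ x i) → (1 - β) / 2 ≤ ∑ i, x i →
          ENNReal.ofReal (c2 * Real.exp (-(16 * c3 * β ^ 2 * n / c1 ^ 2))) ≤
            (PMF.uniformOfFintype (Fin n → Bool)).toMeasure
              {h | β ≤ ∑ i, (if h i then (1 : ℝ) else -1) * x i} := by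
  obtain ⟨c1, c2, c3, hc1, hc1', hc2, hc2', hc3, h⟩ := adaboost_montgomery_smith_corollary_general
  exact ⟨c1, c2, c3, hc1, hc1', hc2, hc2', hc3, fun n _ β _ hβ x _ hx ↦ by
    simpa only [Fintype.card_fin] using h (Fin n) β hβ x hx⟩
end

section
/- There exist universal constants c₀, c₁ ∈ (0,1] and c₂ ≥ 1 with the following property. Let u be an integer with u ≥ 2, let r, r₁ be nonnegative reals with r₁ = α²·r for some α ≥ 1 and r₁ ≤ u, let 0 < δ ≤ 1, and let γ satisfy 0 < γ < 1/4 and γ ≤ c₀/(2α). Set k = ln(u)·γ^{−2} and N = 2·c₁^{−2}·k·ln(k/δ)·exp(8·c₂·γ²·r₁). Let S ⊆ {1,…,u} be such that the set {1,…,u−r₁} \ S has at least r elements, and let F_{r,S} denote its r smallest elements. Let H be a random hypothesis set consisting of the fixed hypothesis h₀ together with k·⌈N/k⌉ independent uniformly random vectors in {−1,1}^u. Then with probability at least 1 − δ over H, for every probability distribution D on {1,…,u} whose support is exactly S, there exists h ∈ H such that ∑_{i ∈ S} D(i)·h(i) ≥ γ/4 and, moreover, either h = h₀ or h takes the value −1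 on at least (1/2 + αγ/2)·r of the points in F_{r,S}. -/
/-!
Split the random vectors into `K = ⌈k⌉` blocks of `⌈N / k⌉` vectors and run boosting by exponential
weights against them, one block per round. If every round supplies a hypothesis of advantage `3γ`
under the current weights, then after `K ≥ ln(u) / γ²` rounds the sum of these hypotheses is at
least `γK` at every point of `S`; averaging, for every distribution on `S` one of them has advantage
at least `γ`. The weights of a round depend only on the earlier blocks, so it suffices to bound the
failure probability of one block for fixed weights `w`.

If `h₀` does not have advantage `3γ`, then a constant fraction of the mass of `w` lies on the at
most `r₁ + 1` points where `h₀ = -1`. That a random vector has correlation with `w` of order `γ`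
times this mass is an anticoncentration statement: biasing the signs on these points by `O(γ)`, and
all signs slightly in proportion to `w`, makes it typical, and the Paley–Zygmund inequality with
this change of measure bounds its true probability below by `exp(-O(γ² r₁ + 1))`. In the same way a
random vector has enough minus signs on `F` with probability `exp(-O(α² γ² r + 1))`, where
`α² r = r₁`, and the two events are independent because `F` is disjoint from `S`.
-/

open MeasureTheory

/-- The sign `±1` associated with a Boolean (`true ↦ 1`, `false ↦ -1`). -/
noncomputable def boolSign (b : Bool) : ℝ := if b then 1 else -1

section

open Finset Real
open scoped BigOperators

section UniformProbability

variable {Ω Ω' ι : Type*} [Fintype Ω] [Fintype Ω'] [Fintype ι]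

/-- The probability of the event `A` for a uniformly random point of the finite type `Ω`, written
as the expectation of an indicator so that it can be combined with other averages `𝔼`. -/
noncomputable def unifProb (A : Set Ω) : ℝ := 𝔼 ω, A.indicator 1 ω

lemma unifProb_nonneg (A : Set Ω) : 0 ≤ unifProb A :=
  expect_nonneg fun _ _ => Set.indicator_nonneg (fun _ _ => zero_le_one) _

lemma unifProb_mono {A B : Set Ω} (h : A ⊆ B) : unifProb A ≤ unifProb B :=
  expect_le_expect fun _ _ => Set.indicator_le_indicator_of_subset h (fun _ => zero_le_one) _

lemma unifProb_univ [Nonempty Ω] : unifProb (Set.univ : Set Ω) = 1 := by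
  simp [unifProb]

lemma unifProb_compl [Nonempty Ω] (A : Set Ω) : unifProb Aᶜ = 1 - unifProb A := by
  have hcompl : unifProb Aᶜ + unifProb A = 1 := by
    simp only [unifProb, ← expect_add_distrib, Set.indicator_compl_add_self_apply, Pi.one_apply,
      Fintype.expect_one]
  exact eq_sub_of_add_eq hcompl

lemma unifProb_preimage_equiv (e : Ω ≃ Ω') (A : Set Ω') : unifProb (e ⁻¹' A) = unifProb A :=
  Fintype.expect_equiv e _ _ fun _ => rfl

lemma toMeasure_uniformOfFintype_eq_ofReal_unifProb [Nonempty Ω] [MeasurableSpace Ω]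
    [MeasurableSingletonClass Ω] (A : Set Ω) :
    (PMF.uniformOfFintype Ω).toMeasure A = ENNReal.ofReal (unifProb A) := by
  classical
  have hsum : ∑ ω, A.indicator (1 : Ω → ℝ) ω = Fintype.card A := by
    simp [Set.indicator_apply, Fintype.card_subtype]
  rw [PMF.toMeasure_uniformOfFintype_apply _ A.toFinite.measurableSet, unifProb,
    Fintype.expect_eq_sum_div_card, hsum, ENNReal.ofReal_div_of_pos (by positivity),
    ENNReal.ofReal_natCast, ENNReal.ofReal_natCast]

lemma expect_prod_apply [DecidableEq ι] (f : ι → Ω → ℝ) :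
    𝔼 ω : ι → Ω, ∏ i, f i (ω i) = ∏ i, 𝔼 x, f i x := by
  simp only [Fintype.expect_eq_sum_div_card, prod_div_distrib, prod_univ_sum,
    Fintype.piFinset_univ, prod_const, card_univ, Fintype.card_fun, Nat.cast_pow]

lemma expect_mul_of_dependsOn [DecidableEq ι] [Nonempty Ω] {s : Set ι} {f g : (ι → Ω) → ℝ}
    (hf : DependsOn f s) (hg : DependsOn g sᶜ) :
    𝔼 ω, f ω * g ω = (𝔼 ω, f ω) * 𝔼 ω, g ω := by
  classical
  -- Exchanging the coordinates in `s` between two independent copies makes `f` and `g` see the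
  -- same copy.
  let swap : (ι → Ω) × (ι → Ω) → (ι → Ω) × (ι → Ω) :=
    fun p => (s.piecewise p.1 p.2, s.piecewise p.2 p.1)
  have hswap : Function.Involutive swap := fun p => by
    ext i <;> by_cases hi : i ∈ s <;> simp [swap, hi]
  have hpair (p : (ι → Ω) × (ι → Ω)) : f p.1 * g p.2 = f (swap p).1 * g (swap p).1 := by
    rw [hf (y := (swap p).1) fun i hi => by simp [swap, hi],
      hg (y := (swap p).1) fun i (hi : i ∉ s) => by simp [swap, hi]]
  calc 𝔼 ω, f ω * g ω
      = 𝔼 p : (ι → Ω) × (ι → Ω), f p.1 * g p.1 := by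
        simp [← univ_product_univ, expect_product]
    _ = 𝔼 p : (ι → Ω) × (ι → Ω), f p.1 * g p.2 :=
        (Fintype.expect_equiv hswap.toPerm _ _ hpair).symm
    _ = (𝔼 ω, f ω) * 𝔼 ω, g ω := by
        rw [Fintype.expect_mul_expect, ← univ_product_univ, expect_product]

lemma unifProb_inter_of_dependsOn [DecidableEq ι] [Nonempty Ω] {s : Set ι} {A B : Set (ι → Ω)}
    (hA : DependsOn (· ∈ A) s) (hB : DependsOn (· ∈ B) sᶜ) :
    unifProb (A ∩ B) = unifProb A * unifProb B := by
  classical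
  have hind {C : Set (ι → Ω)} {t : Set ι} (hC : DependsOn (· ∈ C) t) :
      DependsOn (C.indicator (1 : (ι → Ω) → ℝ)) t := fun x y hxy => by
    simp [Set.indicator_apply, (hC hxy : (x ∈ C) = (y ∈ C))]
  simp only [unifProb, Set.inter_indicator_one, Pi.mul_apply]
  exact expect_mul_of_dependsOn (hind hA) (hind hB)

lemma unifProb_forall_mem [DecidableEq ι] (A : Set Ω) :
    unifProb {ω : ι → Ω | ∀ i, ω i ∈ A} = unifProb A ^ Fintype.card ι := by
  classical
  have hind (ω : ι → Ω) : {ω : ι → Ω | ∀ i, ω i ∈ A}.indicator (1 : (ι → Ω) → ℝ) ω =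
      ∏ i, A.indicator 1 (ω i) := by
    simp [Set.indicator_apply, prod_ite_zero]
  simp only [unifProb, hind, expect_prod_apply, prod_const, card_univ]

lemma one_sub_exp_le_unifProb_exists_mem [DecidableEq ι] [Nonempty Ω] {A : Set Ω} {p : ℝ}
    (hp : p ≤ unifProb A) :
    1 - exp (-p * Fintype.card ι) ≤ unifProb {ω : ι → Ω | ∃ i, ω i ∈ A} := by
  have hcompl : {ω : ι → Ω | ∃ i, ω i ∈ A} = {ω | ∀ i, ω i ∈ Aᶜ}ᶜ := by
    ext ω; simp
  have hpow : unifProb Aᶜ ^ Fintype.card ι ≤ exp (-p * Fintype.card ι) := by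
    rw [mul_comm, exp_nat_mul]
    gcongr
    · exact unifProb_nonneg _
    · rw [unifProb_compl]
      linarith [one_sub_le_exp_neg p]
  rw [hcompl, unifProb_compl, unifProb_forall_mem]
  linarith

lemma unifProb_eq_expect_unifProb_cons {n : ℕ} (C : Set (Fin (n + 1) → Ω)) :
    unifProb C = 𝔼 x, unifProb {ω : Fin n → Ω | Fin.cons x ω ∈ C} := by
  rw [unifProb, ← Fintype.expect_equiv (Fin.consEquiv fun _ => Ω) _ _ fun _ => rfl,
    ← univ_product_univ, expect_product]
  rfl

lemma mul_le_unifProb_of_cons {n : ℕ} {A : Set Ω} {C : Set (Fin (n + 1) → Ω)} {q s : ℝ}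
    (hs : 0 ≤ s) (hA : q ≤ unifProb A)
    (hC : ∀ x ∈ A, s ≤ unifProb {ω : Fin n → Ω | Fin.cons x ω ∈ C}) :
    q * s ≤ unifProb C := by
  calc q * s ≤ unifProb A * s := by gcongr
    _ = 𝔼 x, A.indicator 1 x * s := expect_mul _ _ _
    _ ≤ 𝔼 x, unifProb {ω : Fin n → Ω | Fin.cons x ω ∈ C} := by
        refine expect_le_expect fun x _ => ?_
        by_cases hx : x ∈ A
        · simpa [hx] using hC x hx
        · simpa [hx] using unifProb_nonneg _
    _ = unifProb C := (unifProb_eq_expect_unifProb_cons C).symm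

lemma sq_expect_mul_sub_le_unifProb_mul {X G : Ω → ℝ} {b : ℝ} (hG : 0 ≤ G) (hb : 0 ≤ b)
    (hbX : b * 𝔼 ω, G ω ≤ 𝔼 ω, X ω * G ω) :
    (𝔼 ω, X ω * G ω - b * 𝔼 ω, G ω) ^ 2 ≤
      unifProb {ω | b ≤ X ω} * 𝔼 ω, X ω ^ 2 * G ω ^ 2 := by
  let A : Set Ω := {ω | b ≤ X ω}
  have htrunc : 𝔼 ω, X ω * G ω - b * 𝔼 ω, G ω ≤ 𝔼 ω, A.indicator 1 ω * (X ω * G ω) := by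
    rw [mul_expect, ← expect_sub_distrib]
    refine expect_le_expect fun ω _ => ?_
    by_cases hω : b ≤ X ω
    · simpa [A, hω] using mul_nonneg hb (hG ω)
    · simpa [A, hω] using mul_le_mul_of_nonneg_right (not_le.1 hω).le (hG ω)
  calc (𝔼 ω, X ω * G ω - b * 𝔼 ω, G ω) ^ 2
      ≤ (𝔼 ω, A.indicator 1 ω * (X ω * G ω)) ^ 2 :=
        pow_le_pow_left₀ (sub_nonneg.2 hbX) htrunc 2
    _ ≤ (𝔼 ω, A.indicator (1 : Ω → ℝ) ω ^ 2) * 𝔼 ω, (X ω * G ω) ^ 2 :=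
        expect_mul_sq_le_sq_mul_sq _ _ _
    _ = unifProb A * 𝔼 ω, X ω ^ 2 * G ω ^ 2 := by
        simp only [sq (Set.indicator _ _ _), ← Pi.mul_apply (A.indicator 1), mul_pow, unifProb,
          ← Set.inter_indicator_one, Set.inter_self]

end UniformProbability

section Rademacher

lemma boolSign_sq (b : Bool) : boolSign b ^ 2 = 1 := by
  cases b <;> norm_num [boolSign]

lemma abs_boolSign (b : Bool) : |boolSign b| = 1 := by
  cases b <;> norm_num [boolSign]

lemma abs_coe_sign_le_one (x : ℝ) : |(SignType.sign x : ℝ)| ≤ 1 := by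
  rcases lt_trichotomy x 0 with hx | rfl | hx <;> simp [*]

variable {ι : Type*}

lemma dependsOn_le_sum_mul_boolSign (c : ℝ) (w : ι → ℝ) (S : Finset ι) :
    DependsOn (· ∈ {ω : ι → Bool | c ≤ ∑ i ∈ S, w i * boolSign (ω i)}) (S : Set ι) :=
  fun x y hxy => by
    simp only [Set.mem_ofPred_eq]
    rw [sum_congr rfl fun i hi => by rw [hxy i hi]]

variable [Fintype ι]

/-- The Rademacher sum `∑ i, w i * ε i` with weights `w`, the signs `ε` being encoded as
Booleans. -/
noncomputable def rademacherSum (w : ι → ℝ) (ω : ι → Bool) : ℝ := ∑ i, w i * boolSign (ω i)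

/-- The density, with respect to independent uniform signs, of independent signs of means `τ i`;
weighting by it is a change of measure that biases the `i`-th sign by `τ i`. It is a genuine
density when `|τ i| ≤ 1` for all `i`. -/
noncomputable def signTilt (τ : ι → ℝ) (ω : ι → Bool) : ℝ := ∏ i, (1 + τ i * boolSign (ω i))

lemma signTilt_nonneg {τ : ι → ℝ} (hτ : ∀ i, |τ i| ≤ 1) : 0 ≤ signTilt τ := fun ω =>
  prod_nonneg fun i _ => by
    have habs : |τ i * boolSign (ω i)| ≤ 1 := by simpa [abs_mul, abs_boolSign] using hτ i
    linarith [neg_abs_le (τ i * boolSign (ω i))]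

lemma signTilt_sq (τ : ι → ℝ) (ω : ι → Bool) :
    signTilt τ ω ^ 2 = (∏ i, (1 + τ i ^ 2)) * signTilt (fun i => 2 * τ i / (1 + τ i ^ 2)) ω := by
  simp only [signTilt, ← prod_pow, ← prod_mul_distrib]
  refine prod_congr rfl fun i _ => ?_
  have hpos : 1 + τ i ^ 2 ≠ 0 := by positivity
  field_simp
  linear_combination τ i ^ 2 * boolSign_sq (ω i)

/-- The tilt `2 * c i * sign (w i)` produces the mean `2 * ∑ i, c i * |w i|`; the further tilt
proportional to `w` makes the mean comparable to the standard deviation `√(∑ i, w i ^ 2)`. -/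
lemma exists_tilt {w c : ι → ℝ} (hw : w ≠ 0) (hc : ∀ i, 0 ≤ c i) (hc' : ∀ i, c i ≤ 1 / 4) :
    ∃ τ : ι → ℝ, (∀ i, |τ i| ≤ 1) ∧ (∀ i, 0 ≤ w i * τ i) ∧
      ∑ i, w i * τ i = 2 * ∑ i, c i * |w i| + √(∑ i, w i ^ 2) / 2 ∧
      ∑ i, τ i ^ 2 ≤ 8 * ∑ i, c i ^ 2 + 1 / 2 := by
  obtain ⟨i₀, hi₀⟩ := Function.ne_iff.1 hw
  set s := √(∑ i, w i ^ 2)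
  have hs_sq : s ^ 2 = ∑ i, w i ^ 2 := sq_sqrt (sum_nonneg fun i _ => sq_nonneg _)
  have hle (i : ι) : |w i| ≤ s := abs_le_sqrt
    (single_le_sum (f := fun i => w i ^ 2) (fun i _ => sq_nonneg _) (mem_univ i))
  have hs : 0 < s := (abs_pos.2 hi₀).trans_le (hle i₀)
  let τ : ι → ℝ := fun i => 2 * c i * SignType.sign (w i) + w i / (2 * s)
  have hwτ (i : ι) : w i * τ i = 2 * (c i * |w i|) + w i ^ 2 / (2 * s) := by
    rw [← self_mul_sign]
    ring
  have hsign_le (i : ι) : |2 * c i * SignType.sign (w i)| ≤ 2 * c i := by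
    rw [abs_mul, abs_of_nonneg (by linarith [hc i])]
    exact mul_le_of_le_one_right (by linarith [hc i]) (abs_coe_sign_le_one _)
  have hτ_sq (i : ι) : τ i ^ 2 ≤ 8 * c i ^ 2 + w i ^ 2 / (2 * s ^ 2) :=
    calc τ i ^ 2 ≤ 2 * ((2 * c i * SignType.sign (w i)) ^ 2 + (w i / (2 * s)) ^ 2) := add_sq_le
      _ ≤ 2 * ((2 * c i) ^ 2 + (w i / (2 * s)) ^ 2) := by
        gcongr 2 * (?_ + _)
        exact sq_le_sq' (neg_le_of_abs_le (hsign_le i)) (le_of_abs_le (hsign_le i))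
      _ = 8 * c i ^ 2 + w i ^ 2 / (2 * s ^ 2) := by field_simp; ring
  refine ⟨τ, fun i => ?_, fun i => ?_, ?_, ?_⟩
  · have hw_le : |w i / (2 * s)| ≤ 1 / 2 := by
      rw [abs_div, abs_of_pos (by positivity : 0 < 2 * s), div_le_iff₀ (by positivity)]
      linarith [hle i]
    linarith [abs_add_le (2 * c i * SignType.sign (w i)) (w i / (2 * s)), hsign_le i, hc' i]
  · have := hc i
    rw [hwτ]
    positivity
  · simp only [hwτ, sum_add_distrib, ← sum_div, ← hs_sq, ← mul_sum]
    field_simp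
  · refine (sum_le_sum fun i _ => hτ_sq i).trans (le_of_eq ?_)
    rw [sum_add_distrib, ← sum_div, ← hs_sq, ← mul_sum]
    field_simp

variable [DecidableEq ι]

lemma expect_prod_boolSign_mul_signTilt (A : Finset ι) (τ : ι → ℝ) :
    𝔼 ω, (∏ i ∈ A, boolSign (ω i)) * signTilt τ ω = ∏ i ∈ A, τ i := by
  have hcoord (i : ι) :
      𝔼 b, (if i ∈ A then boolSign b else 1) * (1 + τ i * boolSign b) =
        if i ∈ A then τ i else 1 := by
    rw [Fintype.expect_eq_sum_div_card, Fintype.sum_bool]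
    split_ifs <;> simp [boolSign] <;> ring
  calc 𝔼 ω, (∏ i ∈ A, boolSign (ω i)) * signTilt τ ω
      = 𝔼 ω : ι → Bool, ∏ i,
          (if i ∈ A then boolSign (ω i) else 1) * (1 + τ i * boolSign (ω i)) := by
        simp only [signTilt, prod_mul_distrib, Fintype.prod_ite_mem]
    _ = ∏ i, if i ∈ A then τ i else 1 := by
        rw [expect_prod_apply fun i b =>
          (if i ∈ A then boolSign b else 1) * (1 + τ i * boolSign b)]
        exact prod_congr rfl fun i _ => hcoord i
    _ = ∏ i ∈ A, τ i := Fintype.prod_ite_mem _ _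

lemma expect_signTilt (τ : ι → ℝ) : 𝔼 ω, signTilt τ ω = 1 := by
  simpa using expect_prod_boolSign_mul_signTilt ∅ τ

lemma expect_boolSign_mul_signTilt (τ : ι → ℝ) (i : ι) :
    𝔼 ω, boolSign (ω i) * signTilt τ ω = τ i := by
  simpa using expect_prod_boolSign_mul_signTilt {i} τ

lemma expect_boolSign_mul_boolSign_mul_signTilt (τ : ι → ℝ) (i j : ι) :
    𝔼 ω, boolSign (ω i) * boolSign (ω j) * signTilt τ ω =
      τ i * τ j + if i = j then 1 - τ i ^ 2 else 0 := by
  rcases eq_or_ne i j with rfl | hij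
  · simp only [← sq, boolSign_sq, one_mul, expect_signTilt, if_true]
    ring
  · simpa [prod_pair hij, hij] using expect_prod_boolSign_mul_signTilt {i, j} τ

lemma expect_rademacherSum_mul_signTilt (w τ : ι → ℝ) :
    𝔼 ω, rademacherSum w ω * signTilt τ ω = ∑ i, w i * τ i := by
  simp only [rademacherSum, sum_mul, expect_sum_comm, mul_assoc, ← mul_expect,
    expect_boolSign_mul_signTilt]

lemma expect_rademacherSum_sq_mul_signTilt (w τ : ι → ℝ) :
    𝔼 ω, rademacherSum w ω ^ 2 * signTilt τ ω =
      (∑ i, w i * τ i) ^ 2 + ∑ i, w i ^ 2 * (1 - τ i ^ 2) := by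
  have hexpand (ω : ι → Bool) : rademacherSum w ω ^ 2 * signTilt τ ω =
      ∑ i, ∑ j, w i * w j * (boolSign (ω i) * boolSign (ω j) * signTilt τ ω) := by
    rw [rademacherSum, sq, sum_mul_sum]
    simp only [sum_mul]
    exact sum_congr rfl fun i _ => sum_congr rfl fun j _ => by ring
  simp only [hexpand, expect_sum_comm, ← mul_expect, expect_boolSign_mul_boolSign_mul_signTilt,
    mul_add, sum_add_distrib, mul_ite, mul_zero, sum_ite_eq, mem_univ, if_true]
  simp only [sq, sum_mul_sum, mul_mul_mul_comm]

/-- Squaring the density turns the means `τ i` into `2 * τ i / (1 + τ i ^ 2)`, so the second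
moment is that of a sum of independent signs, whose mean at most doubles. -/
lemma expect_rademacherSum_sq_mul_signTilt_sq_le {w τ : ι → ℝ} (hwτ : ∀ i, 0 ≤ w i * τ i) :
    𝔼 ω, rademacherSum w ω ^ 2 * signTilt τ ω ^ 2 ≤
      exp (∑ i, τ i ^ 2) * (4 * (∑ i, w i * τ i) ^ 2 + ∑ i, w i ^ 2) := by
  set σ : ι → ℝ := fun i => 2 * τ i / (1 + τ i ^ 2)
  have hwσ (i : ι) : w i * σ i = 2 * (w i * τ i) / (1 + τ i ^ 2) := by ring
  have hmean_nonneg : 0 ≤ ∑ i, w i * σ i := sum_nonneg fun i _ => by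
    rw [hwσ]
    have := hwτ i
    positivity
  have hmean_le : ∑ i, w i * σ i ≤ 2 * ∑ i, w i * τ i := by
    rw [mul_sum]
    refine sum_le_sum fun i _ => ?_
    rw [hwσ]
    exact div_le_self (by linarith [hwτ i]) (by linarith [sq_nonneg (τ i)])
  have hvar : ∑ i, w i ^ 2 * (1 - σ i ^ 2) ≤ ∑ i, w i ^ 2 :=
    sum_le_sum fun i _ => mul_le_of_le_one_right (sq_nonneg _) (by linarith [sq_nonneg (σ i)])
  have hmass : ∏ i, (1 + τ i ^ 2) ≤ exp (∑ i, τ i ^ 2) := by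
    rw [exp_sum]
    exact prod_le_prod (fun _ _ => by positivity) fun i _ => by linarith [add_one_le_exp (τ i ^ 2)]
  calc 𝔼 ω, rademacherSum w ω ^ 2 * signTilt τ ω ^ 2
      = (∏ i, (1 + τ i ^ 2)) * 𝔼 ω, rademacherSum w ω ^ 2 * signTilt σ ω := by
        simp only [signTilt_sq, mul_expect, mul_left_comm, σ]
    _ = (∏ i, (1 + τ i ^ 2)) * ((∑ i, w i * σ i) ^ 2 + ∑ i, w i ^ 2 * (1 - σ i ^ 2)) := by
        rw [expect_rademacherSum_sq_mul_signTilt]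
    _ ≤ (∏ i, (1 + τ i ^ 2)) * ((2 * ∑ i, w i * τ i) ^ 2 + ∑ i, w i ^ 2) := by gcongr
    _ ≤ exp (∑ i, τ i ^ 2) * ((2 * ∑ i, w i * τ i) ^ 2 + ∑ i, w i ^ 2) := by gcongr
    _ = exp (∑ i, τ i ^ 2) * (4 * (∑ i, w i * τ i) ^ 2 + ∑ i, w i ^ 2) := by ring

lemma exp_neg_div_le_unifProb_of_tilt {w τ : ι → ℝ} {b : ℝ} (hτ : ∀ i, |τ i| ≤ 1)
    (hwτ : ∀ i, 0 ≤ w i * τ i) (hb : 0 ≤ b) (hm : 0 < ∑ i, w i * τ i)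
    (hbm : 2 * b ≤ ∑ i, w i * τ i) (hv : ∑ i, w i ^ 2 ≤ 4 * (∑ i, w i * τ i) ^ 2) :
    exp (-∑ i, τ i ^ 2) / 32 ≤ unifProb {ω | b ≤ rademacherSum w ω} := by
  set m := ∑ i, w i * τ i
  set P := unifProb {ω | b ≤ rademacherSum w ω}
  have hpz : (m - b) ^ 2 ≤ P * 𝔼 ω, rademacherSum w ω ^ 2 * signTilt τ ω ^ 2 := by
    have h := sq_expect_mul_sub_le_unifProb_mul (X := rademacherSum w) (signTilt_nonneg hτ) hb
    simp only [expect_signTilt, expect_rademacherSum_mul_signTilt, mul_one] at h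
    exact h (by linarith)
  have hmoment : m ^ 2 ≤ m ^ 2 * (32 * exp (∑ i, τ i ^ 2) * P) := by
    calc m ^ 2 ≤ 4 * (m - b) ^ 2 := by nlinarith
      _ ≤ 4 * (P * 𝔼 ω, rademacherSum w ω ^ 2 * signTilt τ ω ^ 2) := by gcongr
      _ ≤ 4 * (P * (exp (∑ i, τ i ^ 2) * (4 * m ^ 2 + 4 * m ^ 2))) := by
          gcongr
          · exact unifProb_nonneg _
          · exact (expect_rademacherSum_sq_mul_signTilt_sq_le hwτ).trans (by gcongr)
      _ = m ^ 2 * (32 * exp (∑ i, τ i ^ 2) * P) := by ring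
  have hone := le_of_mul_le_mul_left ((mul_one _).trans_le hmoment) (by positivity)
  rw [exp_neg, div_le_iff₀ (by positivity), inv_le_iff_one_le_mul₀ (exp_pos _)]
  linarith

lemma exp_neg_div_le_unifProb_rademacherSum (w : ι → ℝ) {c : ι → ℝ} (hc : ∀ i, 0 ≤ c i)
    (hc' : ∀ i, c i ≤ 1 / 4) :
    exp (-(8 * ∑ i, c i ^ 2 + 1 / 2)) / 32 ≤
      unifProb {ω | ∑ i, c i * |w i| ≤ rademacherSum w ω} := by
  rcases eq_or_ne w 0 with rfl | hw
  · have hexp : exp (-(8 * ∑ i, c i ^ 2 + 1 / 2)) ≤ 1 := exp_le_one_iff.2 (by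
      have : 0 ≤ ∑ i, c i ^ 2 := sum_nonneg fun i _ => sq_nonneg _
      linarith)
    have huniv : {ω : ι → Bool | ∑ i, c i * |(0 : ι → ℝ) i| ≤ rademacherSum 0 ω} = Set.univ := by
      simp [rademacherSum]
    rw [huniv, unifProb_univ]
    linarith
  · obtain ⟨τ, hτ, hwτ, hmean, hnorm⟩ := exists_tilt hw hc hc'
    obtain ⟨i₀, hi₀⟩ := Function.ne_iff.1 hw
    have hv : 0 < ∑ i, w i ^ 2 :=
      sum_pos' (fun _ _ => sq_nonneg _) ⟨i₀, mem_univ _, sq_pos_of_ne_zero hi₀⟩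
    have hs : 0 < √(∑ i, w i ^ 2) := sqrt_pos.2 hv
    have hs_sq : √(∑ i, w i ^ 2) ^ 2 = ∑ i, w i ^ 2 := sq_sqrt hv.le
    have hb : 0 ≤ ∑ i, c i * |w i| := sum_nonneg fun i _ => mul_nonneg (hc i) (abs_nonneg _)
    refine le_trans (by gcongr) (exp_neg_div_le_unifProb_of_tilt hτ hwτ hb ?_ ?_ ?_) <;>
      nlinarith

lemma exp_neg_div_le_unifProb_sum (w : ι → ℝ) {L S : Finset ι} (hLS : L ⊆ S) {β : ℝ}
    (hβ : 0 ≤ β) (hβ' : β ≤ 1 / 4) :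
    exp (-(8 * β ^ 2 * #L + 1 / 2)) / 32 ≤
      unifProb {ω : ι → Bool | β * ∑ i ∈ L, |w i| ≤ ∑ i ∈ S, w i * boolSign (ω i)} := by
  have hsum (ω : ι → Bool) : rademacherSum (fun i => if i ∈ S then w i else 0) ω =
      ∑ i ∈ S, w i * boolSign (ω i) := by
    simp [rademacherSum]
  have hmean : ∑ i, (if i ∈ L then β else 0) * |if i ∈ S then w i else 0| =
      β * ∑ i ∈ L, |w i| := by
    simp only [ite_mul, zero_mul, Fintype.sum_ite_mem, mul_sum]
    exact sum_congr rfl fun i hi => by rw [if_pos (hLS hi)]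
  have hnorm : 8 * ∑ i, (if i ∈ L then β else 0) ^ 2 = 8 * β ^ 2 * #L := by
    simp only [ite_pow, zero_pow two_ne_zero, Fintype.sum_ite_mem, sum_const, nsmul_eq_mul]
    ring
  simpa only [hsum, hmean, hnorm] using
    exp_neg_div_le_unifProb_rademacherSum (fun i => if i ∈ S then w i else 0)
      (c := fun i => if i ∈ L then β else 0) (fun i => by split_ifs <;> linarith)
      fun i => by split_ifs <;> linarith

lemma exp_neg_mul_exp_neg_le_unifProb_inter (w : ι → ℝ) (L : Finset ι) {S F : Finset ι}
    (hFS : Disjoint F S) {β β' : ℝ} (hβ : 0 ≤ β) (hβ_le : β ≤ 1 / 4) (hβ' : 0 ≤ β')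
    (hβ'_le : β' ≤ 1 / 4) :
    exp (-(8 * β ^ 2 * #L + 1 / 2)) / 32 * (exp (-(8 * β' ^ 2 * #F + 1 / 2)) / 32) ≤
      unifProb ({ω : ι → Bool | β * ∑ i ∈ L ∩ S, |w i| ≤ ∑ i ∈ S, w i * boolSign (ω i)} ∩
        {ω : ι → Bool | β' * #F ≤ -∑ i ∈ F, boolSign (ω i)}) := by
  have hmargin : exp (-(8 * β ^ 2 * #L + 1 / 2)) / 32 ≤ _ :=
    (by gcongr; exact inter_subset_left : _ ≤ exp (-(8 * β ^ 2 * #(L ∩ S) + 1 / 2)) / 32).trans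
      (exp_neg_div_le_unifProb_sum w inter_subset_right hβ hβ_le)
  have hneg := exp_neg_div_le_unifProb_sum (fun _ => -1) (subset_refl F) hβ' hβ'_le
  have hdep := dependsOn_le_sum_mul_boolSign (β' * #F) (fun _ => -1) F
  simp only [abs_neg, abs_one, sum_const, nsmul_eq_mul, mul_one, neg_one_mul, sum_neg_distrib]
    at hneg hdep
  rw [unifProb_inter_of_dependsOn (dependsOn_le_sum_mul_boolSign _ w S)
    (hdep.mono fun i hi => disjoint_left.1 hFS hi)]
  exact mul_le_mul hmargin hneg (by positivity) (unifProb_nonneg _)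

end Rademacher

section Boosting

variable {Ω ι κ : Type*} {S : Finset ι} {γ : ℝ}

lemma sum_mul_exp_neg_le {w f : ι → ℝ} (hw : 0 ≤ w) (hf : ∀ i, |f i| ≤ 1) (hγ : 0 ≤ γ)
    (hγ' : γ ≤ 1) (hadv : 3 * γ * ∑ i ∈ S, w i ≤ ∑ i ∈ S, w i * f i) :
    ∑ i ∈ S, w i * exp (-γ * f i) ≤ exp (-2 * γ ^ 2) * ∑ i ∈ S, w i := by
  have hexp (i : ι) : exp (-γ * f i) ≤ 1 + γ ^ 2 - γ * f i := by
    have hle : |-γ * f i| ≤ γ := by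
      rw [abs_mul, abs_neg, abs_of_nonneg hγ]
      exact mul_le_of_le_one_right hγ (hf i)
    have hquad := le_of_abs_le (abs_exp_sub_one_sub_id_le (hle.trans hγ'))
    have hsq : (-γ * f i) ^ 2 ≤ γ ^ 2 := sq_le_sq' (neg_le_of_abs_le hle) (le_of_abs_le hle)
    linarith
  calc ∑ i ∈ S, w i * exp (-γ * f i)
      ≤ ∑ i ∈ S, w i * (1 + γ ^ 2 - γ * f i) :=
        sum_le_sum fun i _ => mul_le_mul_of_nonneg_left (hexp i) (hw i)
    _ = (1 + γ ^ 2) * ∑ i ∈ S, w i - γ * ∑ i ∈ S, w i * f i := by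
        rw [mul_sum, mul_sum, ← sum_sub_distrib]
        exact sum_congr rfl fun i _ => by ring
    _ ≤ (1 + γ ^ 2) * ∑ i ∈ S, w i - γ * (3 * γ * ∑ i ∈ S, w i) := by gcongr
    _ = (-2 * γ ^ 2 + 1) * ∑ i ∈ S, w i := by ring
    _ ≤ exp (-2 * γ ^ 2) * ∑ i ∈ S, w i := by
        gcongr
        · exact sum_nonneg fun i _ => hw i
        · exact add_one_le_exp _

lemma pow_le_unifProb_exists_sum_exp_neg_le [Fintype Ω] {V : Ω → Set (ι → ℝ)}
    (hV : ∀ x, ∀ f ∈ V x, ∀ i, |f i| ≤ 1) (hγ : 0 ≤ γ) (hγ' : γ ≤ 1) {q : ℝ} (hq : 0 ≤ q)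
    (hweak : ∀ w : ι → ℝ, 0 ≤ w →
      q ≤ unifProb {x | ∃ f ∈ V x, 3 * γ * ∑ i ∈ S, w i ≤ ∑ i ∈ S, w i * f i})
    (K : ℕ) {w : ι → ℝ} (hw : 0 ≤ w) :
    q ^ K ≤ unifProb {x : Fin K → Ω | ∃ f : Fin K → ι → ℝ, (∀ j, f j ∈ V (x j)) ∧
      ∑ i ∈ S, w i * exp (-γ * ∑ j, f j i) ≤ exp (-2 * γ ^ 2) ^ K * ∑ i ∈ S, w i} := by
  induction K generalizing w with
  | zero =>
    refine (unifProb_univ.symm.le.trans' (pow_zero q).le).trans (unifProb_mono fun x _ => ?_)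
    exact ⟨Fin.elim0, Fin.rec0, by simp⟩
  | succ K ih =>
    rw [pow_succ']
    refine mul_le_unifProb_of_cons (pow_nonneg hq K) (hweak w hw) fun x ⟨f, hfV, hf⟩ => ?_
    have hstep := sum_mul_exp_neg_le hw (hV x f hfV) hγ hγ' hf
    refine (ih (w := fun i => w i * exp (-γ * f i))
      fun i => mul_nonneg (hw i) (exp_pos _).le).trans (unifProb_mono ?_)
    rintro y ⟨fs, hfsV, hfs⟩
    refine ⟨Fin.cons f fs, Fin.cases hfV hfsV, ?_⟩
    calc ∑ i ∈ S, w i * exp (-γ * ∑ j, (Fin.cons f fs : Fin (K + 1) → ι → ℝ) j i)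
        = ∑ i ∈ S, w i * exp (-γ * f i) * exp (-γ * ∑ j, fs j i) := by
          simp only [Fin.sum_univ_succ, Fin.cons_zero, Fin.cons_succ, mul_add, exp_add, mul_assoc]
      _ ≤ exp (-2 * γ ^ 2) ^ K * ∑ i ∈ S, w i * exp (-γ * f i) := hfs
      _ ≤ exp (-2 * γ ^ 2) ^ K * (exp (-2 * γ ^ 2) * ∑ i ∈ S, w i) := by gcongr
      _ = exp (-2 * γ ^ 2) ^ (K + 1) * ∑ i ∈ S, w i := by ring

lemma exists_le_sum_mul_of_sum_exp_neg_le [Fintype κ] [Nonempty κ] {f : κ → ι → ℝ} (hγ : 0 < γ)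
    (hS : #S ≤ exp (γ ^ 2 * Fintype.card κ))
    (hf : ∑ i ∈ S, exp (-γ * ∑ j, f j i) ≤ exp (-2 * γ ^ 2) ^ Fintype.card κ * #S)
    {D : ι → ℝ} (hD : 0 ≤ D) (hDS : ∑ i ∈ S, D i = 1) :
    ∃ j, γ ≤ ∑ i ∈ S, D i * f j i := by
  have hmargin : ∀ i ∈ S, γ * Fintype.card κ ≤ ∑ j, f j i := fun i hi => by
    have hexp : exp (-γ * ∑ j, f j i) ≤ exp (-(γ ^ 2 * Fintype.card κ)) :=
      calc exp (-γ * ∑ j, f j i) ≤ ∑ i ∈ S, exp (-γ * ∑ j, f j i) :=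
            single_le_sum (f := fun i => exp (-γ * ∑ j, f j i)) (fun _ _ => (exp_pos _).le) hi
        _ ≤ exp (-2 * γ ^ 2) ^ Fintype.card κ * exp (γ ^ 2 * Fintype.card κ) :=
            hf.trans (by gcongr)
        _ = exp (-(γ ^ 2 * Fintype.card κ)) := by
            rw [← exp_nat_mul, ← exp_add]
            ring_nf
    rw [exp_le_exp] at hexp
    nlinarith
  have hsum : ∑ _j : κ, γ ≤ ∑ j, ∑ i ∈ S, D i * f j i :=
    calc ∑ _j : κ, γ = ∑ i ∈ S, D i * (γ * Fintype.card κ) := by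
          rw [← sum_mul, hDS, sum_const, card_univ, nsmul_eq_mul, one_mul, mul_comm]
      _ ≤ ∑ i ∈ S, D i * ∑ j, f j i :=
          sum_le_sum fun i hi => mul_le_mul_of_nonneg_left (hmargin i hi) (hD i)
      _ = ∑ j, ∑ i ∈ S, D i * f j i := by
          simp only [mul_sum]
          exact sum_comm
  obtain ⟨j, -, hj⟩ := exists_le_of_sum_le univ_nonempty hsum
  exact ⟨j, hj⟩

lemma pow_le_unifProb_forall_exists_le_sum_mul [Fintype Ω] {V : Ω → Set (ι → ℝ)}
    (hV : ∀ x, ∀ f ∈ V x, ∀ i, |f i| ≤ 1) (hγ : 0 < γ) (hγ' : γ ≤ 1) {q : ℝ} (hq : 0 ≤ q)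
    (hweak : ∀ w : ι → ℝ, 0 ≤ w →
      q ≤ unifProb {x | ∃ f ∈ V x, 3 * γ * ∑ i ∈ S, w i ≤ ∑ i ∈ S, w i * f i})
    {K : ℕ} [NeZero K] (hS : #S ≤ exp (γ ^ 2 * K)) :
    q ^ K ≤ unifProb {x : Fin K → Ω | ∀ D : ι → ℝ, 0 ≤ D → ∑ i ∈ S, D i = 1 →
      ∃ j, ∃ f ∈ V (x j), γ ≤ ∑ i ∈ S, D i * f i} := by
  refine (pow_le_unifProb_exists_sum_exp_neg_le hV hγ.le hγ' hq hweak K zero_le_one).trans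
    (unifProb_mono ?_)
  rintro x ⟨f, hfV, hf⟩ D hD hDS
  obtain ⟨j, hj⟩ := exists_le_sum_mul_of_sum_exp_neg_le (f := f) hγ (by simpa using hS)
    (by simpa using hf) hD hDS
  exact ⟨j, f j, hfV j, hj⟩

end Boosting

section Adversarial

variable {ι T : Type*}

lemma card_filter_boolSign_eq_neg_one (F : Finset ι) (x : ι → Bool) :
    (#{i ∈ F | boolSign (x i) = -1} : ℝ) = (#F - ∑ i ∈ F, boolSign (x i)) / 2 := by
  rw [card_filter, Nat.cast_sum, card_eq_sum_ones, Nat.cast_sum, ← sum_sub_distrib, sum_div]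
  refine sum_congr rfl fun i _ => ?_
  cases x i <;> norm_num [boolSign]

variable [DecidableEq ι]

/-- The hypothesis equal to `-1` on `L` and to `1` elsewhere: the fixed hypothesis `h₀`, with `L`
the set of its minus signs. -/
def negOn (L : Finset ι) (i : ι) : ℝ := if i ∈ L then -1 else 1

/-- The hypotheses an adversarial weak learner may return when `g` has been sampled: the fixed
hypothesis `h₀ = negOn L`, and each sampled sign vector with at least `c` minus signs on `F`. -/
def adversarialHypotheses (L F : Finset ι) (c : ℝ) (g : T → ι → Bool) : Set (ι → ℝ) :=
  {f | f = negOn L ∨ (∃ t, f = fun i => boolSign (g t i)) ∧ c ≤ #{i ∈ F | f i = -1}}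

/-- The event that the sampled sign vectors are good enough for adversarial boosting: whatever the
distribution `D` on `S`, some adversarial hypothesis has advantage at least `γ` under `D`. -/
def adversarialEvent (L S F : Finset ι) (c γ : ℝ) : Set (T → ι → Bool) :=
  {g | ∀ D : ι → ℝ, 0 ≤ D → ∑ i ∈ S, D i = 1 →
    ∃ f ∈ adversarialHypotheses L F c g, γ ≤ ∑ i ∈ S, D i * f i}

lemma abs_le_one_of_mem_adversarialHypotheses {L F : Finset ι} {c : ℝ} {g : T → ι → Bool}
    {f : ι → ℝ} (hf : f ∈ adversarialHypotheses L F c g) (i : ι) : |f i| ≤ 1 := by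
  rcases hf with rfl | ⟨⟨t, rfl⟩, -⟩
  · unfold negOn
    split_ifs <;> simp
  · exact (abs_boolSign _).le

lemma exists_mem_insert_of_mem_adversarialEvent [Fintype ι] {L S F : Finset ι} {c γ : ℝ}
    {g : T → ι → Bool} (hg : g ∈ adversarialEvent L S F c γ) {D : ι → ℝ} (hD : 0 ≤ D)
    (hD' : ∑ i, D i = 1) (hDS : ∀ i, 0 < D i ↔ i ∈ S) :
    ∃ f ∈ insert (negOn L) {f | ∃ t, f = fun i => boolSign (g t i)},
      γ ≤ ∑ i ∈ S, D i * f i ∧ (f = negOn L ∨ c ≤ #{i ∈ F | f i = -1}) := by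
  have hsum : ∑ i ∈ S, D i = 1 := (sum_subset S.subset_univ fun i _ hi =>
    ((hD i).eq_or_lt.resolve_right fun h => hi ((hDS i).1 h)).symm).trans hD'
  obtain ⟨f, hf, hmargin⟩ := hg D hD hsum
  exact ⟨f, hf.imp_right And.left, hmargin, hf.imp_right And.right⟩

lemma sum_mul_negOn (w : ι → ℝ) (L S : Finset ι) :
    ∑ i ∈ S, w i * negOn L i = ∑ i ∈ S, w i - 2 * ∑ i ∈ L ∩ S, w i := by
  rw [inter_comm, ← sum_ite_mem, mul_sum, ← sum_sub_distrib]
  refine sum_congr rfl fun i _ => ?_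
  unfold negOn
  split_ifs <;> ring

variable {L S F : Finset ι} {β γ p : ℝ}

/-- Unless `h₀` already has advantage `3 * γ`, at least a quarter of the mass of `w` on `S` lies in
`L ∩ S`, so that it is enough for a random vector to correlate with `w` by `12 * γ` times the mass
of `L ∩ S`; the smallness of `L` is what makes this likely. -/
lemma one_sub_exp_le_unifProb_exists_mem_adversarialHypotheses [Fintype ι] [Fintype T]
    [DecidableEq T] (hFS : Disjoint F S) (hγ : 0 ≤ γ) (hγ' : γ ≤ 1 / 48) (hβ : 0 ≤ β)
    (hβ' : β ≤ 1 / 4)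
    (hp : p ≤ exp (-(8 * (12 * γ) ^ 2 * #L + 1 / 2)) / 32 *
      (exp (-(8 * β ^ 2 * #F + 1 / 2)) / 32)) {w : ι → ℝ} (hw : 0 ≤ w) :
    1 - exp (-p * Fintype.card T) ≤
      unifProb {g : T → ι → Bool | ∃ f ∈ adversarialHypotheses L F ((1 / 2 + β / 2) * #F) g,
        3 * γ * ∑ i ∈ S, w i ≤ ∑ i ∈ S, w i * f i} := by
  have hbound := one_sub_exp_le_unifProb_exists_mem (ι := T) <| hp.trans <|
    exp_neg_mul_exp_neg_le_unifProb_inter w L hFS (by positivity) (by linarith) hβ hβ'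
  refine hbound.trans (unifProb_mono ?_)
  rintro g ⟨t, hmargin, hneg⟩
  by_cases hadv : 3 * γ * ∑ i ∈ S, w i ≤ ∑ i ∈ S, w i * negOn L i
  · exact ⟨negOn L, Or.inl rfl, hadv⟩
  refine ⟨fun i => boolSign (g t i), Or.inr ⟨⟨t, rfl⟩, ?_⟩, hmargin.trans' ?_⟩
  · rw [card_filter_boolSign_eq_neg_one]
    linarith [show β * #F ≤ -∑ i ∈ F, boolSign (g t i) from hneg]
  · have hW : 0 ≤ ∑ i ∈ S, w i := sum_nonneg fun i _ => hw i
    have hL : ∑ i ∈ S, w i ≤ 4 * ∑ i ∈ L ∩ S, w i := by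
      rw [sum_mul_negOn] at hadv
      nlinarith
    simp only [abs_of_nonneg (hw _)]
    nlinarith

lemma pow_le_unifProb_adversarialEvent [Fintype ι] (hFS : Disjoint F S) (hγ : 0 < γ)
    (hγ' : γ ≤ 1 / 48) (hβ : 0 ≤ β) (hβ' : β ≤ 1 / 4) (hp₀ : 0 ≤ p)
    (hp : p ≤ exp (-(8 * (12 * γ) ^ 2 * #L + 1 / 2)) / 32 *
      (exp (-(8 * β ^ 2 * #F + 1 / 2)) / 32)) {K m : ℕ} [NeZero K]
    (hS : #S ≤ exp (γ ^ 2 * K)) :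
    (1 - exp (-p * m)) ^ K ≤
      unifProb (adversarialEvent (T := Fin (K * m)) L S F ((1 / 2 + β / 2) * #F) γ) := by
  let blocks : (Fin (K * m) → ι → Bool) ≃ (Fin K → Fin m → ι → Bool) :=
    (finProdFinEquiv.symm.arrowCongr (.refl _)).trans (.curry _ _ _)
  have hq : 0 ≤ 1 - exp (-p * m) := by
    rw [sub_nonneg, exp_le_one_iff, neg_mul, neg_nonpos]
    positivity
  have hweak (w : ι → ℝ) (hw : 0 ≤ w) := one_sub_exp_le_unifProb_exists_mem_adversarialHypotheses
    (T := Fin m) hFS hγ.le hγ' hβ hβ' hp hw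
  rw [Fintype.card_fin] at hweak
  have hboost := pow_le_unifProb_forall_exists_le_sum_mul (K := K)
    (fun _ _ hf => abs_le_one_of_mem_adversarialHypotheses hf) hγ (by linarith) hq hweak hS
  rw [← unifProb_preimage_equiv blocks] at hboost
  refine hboost.trans (unifProb_mono fun g hg D hD hDS => ?_)
  obtain ⟨j, f, hf, hmargin⟩ := hg D hD hDS
  refine ⟨f, hf.imp_right ?_, hmargin⟩
  rintro ⟨⟨t, rfl⟩, hneg⟩
  exact ⟨⟨finProdFinEquiv (j, t), rfl⟩, hneg⟩

end Adversarial

section Sizes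

lemma one_sub_le_one_sub_exp_neg_mul_pow {k p x δ : ℝ} (hk : 2 ≤ k) (hδ : 0 < δ) (hδ' : δ ≤ 1)
    (hx : 2 * log (k / δ) ≤ p * x) : 1 - δ ≤ (1 - exp (-p * x)) ^ ⌈k⌉₊ := by
  have hk₀ : 0 < k := by linarith
  have hexp : exp (-p * x) ≤ (δ / k) ^ 2 :=
    calc exp (-p * x) ≤ exp (2 * log (δ / k)) := by
          rw [exp_le_exp, ← inv_div k δ, log_inv]
          linarith
      _ = (δ / k) ^ 2 := by rw [two_mul, exp_add, exp_log (by positivity), sq]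
  have hunion : ⌈k⌉₊ * exp (-p * x) ≤ δ :=
    calc ⌈k⌉₊ * exp (-p * x) ≤ k ^ 2 * (δ / k) ^ 2 := by
          gcongr
          nlinarith [Nat.ceil_lt_add_one hk₀.le]
      _ = δ ^ 2 := by field_simp
      _ ≤ δ := by nlinarith
  have hratio : (δ / k) ^ 2 ≤ 1 := pow_le_one₀ (by positivity) ((div_le_one hk₀).2 (by linarith))
  have hbernoulli := one_add_mul_le_pow (a := -exp (-p * x)) (by linarith) ⌈k⌉₊
  rw [sub_eq_add_neg 1 (exp _)]
  linarith

lemma two_le_log_mul_inv_sq {u γ : ℝ} (hu : 2 ≤ u) (hγ : 0 < γ) (hγ' : γ ≤ 1 / 2) :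
    2 ≤ log u * (γ ^ 2)⁻¹ := by
  have hlog : 1 / 2 ≤ log u := by
    linarith [log_two_gt_d9, log_le_log two_pos hu]
  rw [← div_eq_mul_inv, le_div_iff₀ (by positivity)]
  nlinarith

variable {ι : Type*} [LinearOrder ι]

/-- The `⌈r⌉` smallest elements of `T`, or all of `T` if it has fewer, selected as those of rank
less than `r`. -/
noncomputable def smallest (T : Finset ι) (r : ℝ) : Finset ι :=
  {i ∈ T | (#{j ∈ T | j < i} : ℝ) < r}

lemma strictMonoOn_card_filter_lt (T : Finset ι) : StrictMonoOn (fun i => #{j ∈ T | j < i}) T :=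
  fun i hi j _ hij => card_lt_card <|
    (ssubset_iff_of_subset (monotone_filter_right _ fun _ _ h => h.trans hij)).2
      ⟨i, by simp [mem_coe.1 hi, hij], by simp⟩

lemma image_card_filter_lt (T : Finset ι) : T.image (fun i => #{j ∈ T | j < i}) = range #T := by
  refine eq_of_subset_of_card_le (image_subset_iff.2 fun i hi => ?_) ?_
  · exact mem_range.2 (card_lt_card (filter_ssubset.2 ⟨i, hi, lt_irrefl i⟩))
  · rw [card_range, card_image_of_injOn (strictMonoOn_card_filter_lt T).injOn]

lemma card_smallest (T : Finset ι) (r : ℝ) : #(smallest T r) = min #T ⌈r⌉₊ := by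
  have hinj : Set.InjOn (fun i => #{j ∈ T | j < i}) (smallest T r) :=
    (strictMonoOn_card_filter_lt T).injOn.mono (filter_subset _ _)
  have himage : (smallest T r).image (fun i => #{j ∈ T | j < i}) = range (min #T ⌈r⌉₊) := by
    have hrange : range (min #T ⌈r⌉₊) = {n ∈ range #T | n < ⌈r⌉₊} := by
      ext n
      simp
    simp only [hrange, smallest, ← Nat.lt_ceil, ← image_card_filter_lt, filter_image]
  rw [← card_image_of_injOn hinj, himage, card_range]

lemma le_card_smallest {T : Finset ι} {r : ℝ} (hr : r ≤ #T) : r ≤ #(smallest T r) := by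
  rw [card_smallest, Nat.cast_min]
  exact le_min hr (Nat.le_ceil r)

lemma card_smallest_le (T : Finset ι) {r : ℝ} (hr : 0 ≤ r) : (#(smallest T r) : ℝ) ≤ r + 1 := by
  rw [card_smallest, Nat.cast_min]
  exact (min_le_right _ _).trans (Nat.ceil_lt_add_one hr).le

/-- The last `⌈r⌉` points of `Fin u`, or all of them if there are fewer; `i : Fin u` stands for the
point `i + 1` of `{1, …, u}`. -/
noncomputable def lastSegment (u : ℕ) (r : ℝ) : Finset (Fin u) :=
  {i | ¬ ((i : ℕ) + 1 : ℝ) ≤ u - r}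

lemma negOn_lastSegment (u : ℕ) (r : ℝ) :
    negOn (lastSegment u r) = fun i : Fin u => if ((i : ℕ) + 1 : ℝ) ≤ u - r then 1 else -1 := by
  ext i
  simp only [negOn, lastSegment, mem_filter_univ, ite_not]

lemma card_lastSegment_le (u : ℕ) {r : ℝ} (hr : 0 ≤ r) : (#(lastSegment u r) : ℝ) ≤ r + 1 := by
  have hcard : #(lastSegment u r) ≤ #(range ⌈r⌉₊) :=
    card_le_card_of_injOn (fun i => (i.rev : ℕ)) (fun i hi => by
      have hlt : ¬ ((i : ℕ) + 1 : ℝ) ≤ u - r := by simpa [lastSegment] using hi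
      have hrev : ((i.rev : ℕ) : ℝ) + (i + 1) = u := by
        exact_mod_cast (by rw [Fin.val_rev]; omega : (i.rev : ℕ) + (i + 1) = u)
      rw [coe_range, Set.mem_Iio, Nat.lt_ceil]
      linarith) (Fin.val_injective.comp Fin.rev_injective).injOn
  rw [card_range] at hcard
  exact (Nat.cast_le.2 hcard).trans (Nat.ceil_lt_add_one hr).le

end Sizes

/-- The constant `145 = 12 ^ 2 + 1` collects the cost of the advantage on `L` and that of the minus
signs on `F`; the two `+ 1` from rounding the sizes are absorbed by `α * γ ≤ 1 / 48`. -/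
lemma exp_neg_le_mul_exp_neg {α γ r l n : ℝ} (hα : 1 ≤ α) (hγ : 0 < γ) (hαγ : α * γ ≤ 1 / 48)
    (hl : l ≤ α ^ 2 * r + 1) (hn : n ≤ r + 1) :
    (exp (-1) / 32) ^ 2 * exp (-(8 * 145 * γ ^ 2 * (α ^ 2 * r))) ≤
      exp (-(8 * (12 * γ) ^ 2 * l + 1 / 2)) / 32 *
        (exp (-(8 * (α * γ) ^ 2 * n + 1 / 2)) / 32) := by
  have hγ' : γ ^ 2 ≤ (1 / 48) ^ 2 := by gcongr; nlinarith
  have hαγ' : (α * γ) ^ 2 ≤ (1 / 48) ^ 2 := by gcongr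
  have hL : 8 * (12 * γ) ^ 2 * l ≤ 8 * (12 * γ) ^ 2 * (α ^ 2 * r + 1) := by gcongr
  have hF : 8 * (α * γ) ^ 2 * n ≤ 8 * (α * γ) ^ 2 * (r + 1) := by gcongr
  calc (exp (-1) / 32) ^ 2 * exp (-(8 * 145 * γ ^ 2 * (α ^ 2 * r)))
      = exp (-2 - 8 * 145 * γ ^ 2 * (α ^ 2 * r)) / 32 ^ 2 := by
        rw [div_pow, ← exp_nat_mul, sub_eq_add_neg, exp_add]
        norm_num
        ring
    _ ≤ exp (-(8 * (12 * γ) ^ 2 * l + 1 / 2) + -(8 * (α * γ) ^ 2 * n + 1 / 2)) / 32 ^ 2 := by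
        gcongr
        linarith
    _ = _ := by
        rw [exp_add]
        ring

theorem adaboost_adversarial_hypothesis_set_general {ι : Type*} [Fintype ι] [DecidableEq ι]
    {L S F : Finset ι} (hFS : Disjoint F S) {r α γ δ k : ℝ} {m : ℕ} (hα : 1 ≤ α) (hγ : 0 < γ)
    (hαγ : α * γ ≤ 1 / 48) (hδ : 0 < δ) (hδ' : δ ≤ 1) (hL : #L ≤ α ^ 2 * r + 1)
    (hF : #F ≤ r + 1) (hk : 2 ≤ k) (hS : #S ≤ exp (γ ^ 2 * k))
    (hm : 2 * ((exp (-1) / 32) ^ 2)⁻¹ * log (k / δ) * exp (8 * 145 * γ ^ 2 * (α ^ 2 * r)) ≤ m) :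
    ENNReal.ofReal (1 - δ) ≤ (PMF.uniformOfFintype (Fin (⌈k⌉₊ * m) → ι → Bool)).toMeasure
      (adversarialEvent L S F ((1 / 2 + α * γ / 2) * #F) γ) := by
  set p := (exp (-1) / 32) ^ 2 * exp (-(8 * 145 * γ ^ 2 * (α ^ 2 * r)))
  have hpm : 2 * log (k / δ) ≤ p * m := by
    refine (mul_le_mul_of_nonneg_left hm (by positivity)).trans' (le_of_eq ?_)
    simp only [p, exp_neg]
    field_simp
  have : NeZero ⌈k⌉₊ := ⟨(Nat.ceil_pos.2 (by linarith)).ne'⟩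
  have hS' : #S ≤ exp (γ ^ 2 * ⌈k⌉₊) := hS.trans (by gcongr; exact Nat.le_ceil k)
  rw [toMeasure_uniformOfFintype_eq_ofReal_unifProb]
  exact ENNReal.ofReal_le_ofReal <| (one_sub_le_one_sub_exp_neg_mul_pow hk hδ hδ' hpm).trans <|
    pow_le_unifProb_adversarialEvent hFS hγ (by nlinarith) (by positivity) (by linarith)
      (by positivity) (exp_neg_le_mul_exp_neg hα hγ hαγ hL hF) hS'

end

open scoped Classical in
/-- A random hypothesis set `H` consisting of `h₀` together with
`k·⌈N/k⌉` i.i.d. uniform vectors in `{-1,1}^u` is, with probability at least `1 - δ`,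
an *adversarial* weak-learner hypothesis set on `S`: for every distribution `D`
supported exactly on `S`, some `h ∈ H` has advantage at least `γ/4` under `D` and is
either `h₀` or has at least `(1/2 + αγ/2)·r` minus signs on the `r` smallest points
of `{1,…,u−r₁} \ S`. -/
theorem adaboost_adversarial_hypothesis_set :
    ∃ c0 c1 c2 : ℝ, 0 < c0 ∧ c0 ≤ 1 ∧ 0 < c1 ∧ c1 ≤ 1 ∧ 1 ≤ c2 ∧
      ∀ (u : ℕ), 2 ≤ u → ∀ r r1 α γ δ : ℝ,
        0 ≤ r → 0 ≤ r1 → 1 ≤ α → r1 = α ^ 2 * r → r1 ≤ (u : ℝ) →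
        0 < δ → δ ≤ 1 → 0 < γ → γ < 1 / 4 → γ ≤ c0 / (2 * α) →
        ∀ k N : ℝ, k = Real.log u * (γ ^ 2)⁻¹ →
          N = 2 * (c1 ^ 2)⁻¹ * k * Real.log (k / δ) * Real.exp (8 * c2 * γ ^ 2 * r1) →
        ∀ M : ℕ, M = ⌈k⌉₊ * ⌈N / k⌉₊ →
        ∀ h0 : Fin u → ℝ,
          h0 = (fun (i : Fin u) => if ((i : ℕ) + 1 : ℝ) ≤ (u : ℝ) - r1 then 1 else -1) →
        ∀ S : Finset (Fin u),
        ∀ T : Finset (Fin u),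
          T = Finset.univ.filter
            (fun (i : Fin u) => ((i : ℕ) + 1 : ℝ) ≤ (u : ℝ) - r1 ∧ i ∉ S) →
        r ≤ (T.card : ℝ) →
        ∀ F : Finset (Fin u),
          F = T.filter (fun i => ((T.filter (fun j => j < i)).card : ℝ) < r) →
        ENNReal.ofReal (1 - δ) ≤
          (PMF.uniformOfFintype (Fin M → Fin u → Bool)).toMeasure
            {g | ∀ H : Set (Fin u → ℝ),
              H = insert h0 {f | ∃ t : Fin M, f = fun i => boolSign (g t i)} →
              ∀ D : Fin u → ℝ, (∀ i, 0 ≤ D i) → ∑ i, D i = 1 →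
                (∀ i, 0 < D i ↔ i ∈ S) →
                ∃ f ∈ H, γ / 4 ≤ (∑ i ∈ S, D i * f i) ∧
                  (f = h0 ∨
                    (1 / 2 + α * γ / 2) * r ≤ ((F.filter (fun i => f i = -1)).card : ℝ))} := by
  refine ⟨1 / 24, Real.exp (-1) / 32, 145, by norm_num, by norm_num, by positivity,
    by linarith [Real.exp_le_one_iff.2 (by norm_num : (-1 : ℝ) ≤ 0)], by norm_num, ?_⟩
  rintro u hu r r1 α γ δ hr hr1 hα rfl - hδ hδ1 hγ - hγα k N hk hN _ rfl h0 hh0 S T hT hrT F hF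
  have hαγ : α * γ ≤ 1 / 48 := by
    rw [le_div_iff₀ (by linarith)] at hγα
    linarith
  have hk2 : 2 ≤ k := hk ▸ two_le_log_mul_inv_sq (by exact_mod_cast hu) hγ (by nlinarith)
  replace hh0 := hh0.trans (negOn_lastSegment u _).symm
  have hFS : Disjoint F S := by simp +contextual [hF, hT, Finset.disjoint_left]
  replace hF : F = smallest T r := hF
  have hS : (S.card : ℝ) ≤ Real.exp (γ ^ 2 * k) := by
    rw [hk, mul_comm, inv_mul_cancel_right₀ (by positivity), Real.exp_log (by positivity)]
    exact_mod_cast S.card_le_univ.trans_eq (Fintype.card_fin u)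
  have hN_div : 2 * ((Real.exp (-1) / 32) ^ 2)⁻¹ * Real.log (k / δ) *
      Real.exp (8 * 145 * γ ^ 2 * (α ^ 2 * r)) = N / k := by
    rw [hN]
    field_simp
  refine (adaboost_adversarial_hypothesis_set_general hFS hα hγ hαγ hδ hδ1
    (card_lastSegment_le u hr1) (hF ▸ card_smallest_le T hr) hk2 hS
    (hN_div.trans_le (Nat.le_ceil _))).trans (measure_mono ?_)
  rintro g hg _ rfl D hD hD1 hDS
  obtain ⟨f, hf, hmargin, hfF⟩ := exists_mem_insert_of_mem_adversarialEvent hg hD hD1 hDS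
  rw [← hh0] at hf hfF
  exact ⟨f, hf, by linarith, hfF.imp_right <| le_trans <| by
    gcongr; exact hF ▸ le_card_smallest hrT⟩
end
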